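/- Assume in addition 1 − 4a − 2b + 3a² − 6ab > 0, let ε satisfy 0 < ε < (1−3a−2b)/(4a) − c, and put T = [−1 + c + ε, 1 − c − ε]. Then there exists n ∈ ℕ such that m_T^{(n)}(x, y) > 0 for all x, y ∈ T. -/

import Mathlib

open MeasureTheory

/-- The triangular density: `f_t(z) = (t − |z|)/t²` for `|z| ≤ t` and `0` otherwise. -/
noncomputable def triangularDensity (t z : ℝ) : ℝ :=
  if |z| ≤ t then (t - |z|) / t ^ 2 else 0

/-- The kernel `m_T(x,y)` of the branching process, with `t = (1−3a−2b)/2`: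
`m_T(x,y) = [a f_t(ay + 1/2 + a/2 − b − x) + 2a f_t(ay − x) + a f_t(ay − 1/2 − a/2 + b − x)]·1_T(y)`. -/
noncomputable def larssonKernel (a b : ℝ) (T : Set ℝ) (x y : ℝ) : ℝ :=
  (a * triangularDensity ((1 - 3 * a - 2 * b) / 2) (a * y + 1 / 2 + a / 2 - b - x) +
      2 * a * triangularDensity ((1 - 3 * a - 2 * b) / 2) (a * y - x) +
      a * triangularDensity ((1 - 3 * a - 2 * b) / 2) (a * y - 1 / 2 - a / 2 + b - x)) *
    Set.indicator T (fun _ => (1 : ℝ)) y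

/-- The iterated kernels, with the index shifted by one:
`larssonKernelIter a b T n = m_T^{(n+1)}`, i.e. `larssonKernelIter a b T 0 = m_T^{(1)} = m_T`
and `m_T^{(n+1)}(x,y) = ∫_T m_T^{(n)}(x,z) m_T(z,y) dz`. -/
noncomputable def larssonKernelIter (a b : ℝ) (T : Set ℝ) : ℕ → ℝ → ℝ → ℝ
  | 0 => larssonKernel a b T
  | (n + 1) => fun x y => ∫ z in T, larssonKernelIter a b T n x z * larssonKernel a b T z y


lemma tri_eq {t : ℝ} (z : ℝ) : triangularDensity t z = max 0 (t - |z|) / t ^ 2 := by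
  unfold triangularDensity
  split_ifs with h
  · rw [max_eq_right (by linarith)]
  · rw [max_eq_left (by linarith [not_le.1 h])]; simp

lemma tri_nonneg {t : ℝ} (z : ℝ) : 0 ≤ triangularDensity t z := by
  rw [tri_eq]; positivity

lemma tri_pos {t z : ℝ} (h : |z| < t) : 0 < triangularDensity t z := by
  have ht : 0 < t := lt_of_le_of_lt (abs_nonneg z) h
  rw [tri_eq, max_eq_right (by linarith)]
  have : 0 < t - |z| := by linarith
  positivity

lemma tri_cont (t : ℝ) : Continuous (triangularDensity t) := by
  have : triangularDensity t = fun z => max 0 (t - |z|) / t ^ 2 := funext fun z => tri_eq z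
  rw [this]
  fun_prop

/-- the kernel without the indicator -/
noncomputable def kk (a b x y : ℝ) : ℝ :=
  a * triangularDensity ((1 - 3 * a - 2 * b) / 2) (a * y + 1 / 2 + a / 2 - b - x) +
      2 * a * triangularDensity ((1 - 3 * a - 2 * b) / 2) (a * y - x) +
      a * triangularDensity ((1 - 3 * a - 2 * b) / 2) (a * y - 1 / 2 - a / 2 + b - x)

lemma kk_cont' (a b : ℝ) : Continuous (fun p : ℝ × ℝ => kk a b p.2 p.1) := by
  unfold kk
  have := tri_cont ((1 - 3 * a - 2 * b) / 2)
  fun_prop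

lemma kk_cont_left (a b y : ℝ) : Continuous (fun z : ℝ => kk a b z y) := by
  unfold kk
  have := tri_cont ((1 - 3 * a - 2 * b) / 2)
  fun_prop

lemma kk_cont_right (a b x : ℝ) : Continuous (kk a b x) := by
  unfold kk
  have := tri_cont ((1 - 3 * a - 2 * b) / 2)
  fun_prop

lemma kk_nonneg {a b : ℝ} (ha : 0 < a) (x y : ℝ) : 0 ≤ kk a b x y := by
  unfold kk
  have := @tri_nonneg ((1 - 3 * a - 2 * b) / 2)
  have h1 := this (a * y + 1 / 2 + a / 2 - b - x)
  have h2 := this (a * y - x)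
  have h3 := this (a * y - 1 / 2 - a / 2 + b - x)
  positivity

lemma kk_pos {a b : ℝ} (ha : 0 < a) (x y : ℝ)
    (h : |a * y + 1 / 2 + a / 2 - b - x| < (1 - 3 * a - 2 * b) / 2 ∨
      |a * y - x| < (1 - 3 * a - 2 * b) / 2 ∨
      |a * y - 1 / 2 - a / 2 + b - x| < (1 - 3 * a - 2 * b) / 2) : 0 < kk a b x y := by
  unfold kk
  have := @tri_nonneg ((1 - 3 * a - 2 * b) / 2)
  have h1 := this (a * y + 1 / 2 + a / 2 - b - x)
  have h2 := this (a * y - x)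
  have h3 := this (a * y - 1 / 2 - a / 2 + b - x)
  rcases h with h | h | h
  all_goals
    have h4 := tri_pos h
    positivity

noncomputable def kkI (a b R : ℝ) : ℕ → ℝ → ℝ → ℝ
  | 0 => kk a b
  | (n + 1) => fun x y => ∫ z in Set.Icc (-R) R, kkI a b R n x z * kk a b z y

lemma kkI_succ (a b R : ℝ) (n : ℕ) (x y : ℝ) :
    kkI a b R (n + 1) x y = ∫ z in Set.Icc (-R) R, kkI a b R n x z * kk a b z y := rfl

lemma kkI_cont (a b R : ℝ) (n : ℕ) (x : ℝ) : Continuous (kkI a b R n x) := by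
  induction n with
  | zero =>
    exact kk_cont_right a b x
  | succ n ih =>
    show Continuous fun y => ∫ z in Set.Icc (-R) R, kkI a b R n x z * kk a b z y
    apply continuous_parametric_integral_of_continuous _ isCompact_Icc
    have h2 := kk_cont' a b
    exact (ih.comp continuous_snd).mul h2

lemma kkI_nonneg {a : ℝ} (ha : 0 < a) (b R : ℝ) (n : ℕ) (x y : ℝ) : 0 ≤ kkI a b R n x y := by
  induction n generalizing y with
  | zero =>
    rw [kkI]
    exact kk_nonneg ha x y
  | succ n ih =>
    rw [kkI_succ]
    exact integral_nonneg fun z => mul_nonneg (ih z) (kk_nonneg ha z y)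

lemma kkI_pos {a : ℝ} (ha : 0 < a) (b : ℝ) {R : ℝ} (hR : 0 < R) (n : ℕ) (x y w : ℝ)
    (hw : w ∈ Set.Icc (-R) R) (h1 : 0 < kkI a b R n x w) (h2 : 0 < kk a b w y) :
    0 < kkI a b R (n + 1) x y := by
  rw [kkI_succ]
  rw [integral_Icc_eq_integral_Ioc, ← intervalIntegral.integral_of_le (by linarith)]
  apply intervalIntegral.integral_pos (by linarith)
  · exact ((kkI_cont a b R n x).mul (kk_cont_left a b y)).continuousOn
  · intro z _
    exact mul_nonneg (kkI_nonneg ha b R n x z) (kk_nonneg ha z y)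
  · refine ⟨w, hw, ?_⟩
    exact mul_pos h1 h2

lemma iter_eq (a b R : ℝ) (n : ℕ) (x y : ℝ) (hy : y ∈ Set.Icc (-R) R) :
    larssonKernelIter a b (Set.Icc (-R) R) n x y = kkI a b R n x y := by
  induction n generalizing y with
  | zero =>
    show larssonKernel a b _ x y = kk a b x y
    simp only [larssonKernel, kk, Set.indicator_of_mem hy, mul_one]
  | succ n ih =>
    show (∫ z in Set.Icc (-R) R, larssonKernelIter a b _ n x z * larssonKernel a b _ z y) =
      ∫ z in Set.Icc (-R) R, kkI a b R n x z * kk a b z y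
    apply setIntegral_congr_fun measurableSet_Icc
    intro z hz
    simp only
    rw [ih z hz]
    simp only [larssonKernel, kk, Set.indicator_of_mem hy, mul_one]

/-- Pure interval combinatorics. -/
lemma comb {R P Q d v v' τ η ε κ : ℝ} (hR : 0 < R) (hτ : 0 < τ) (hη : 0 < η) (hε : 0 < ε)
    (hRη : R = 1 - τ / 2 + η) (k1 : κ ≤ ε) (k2 : κ ≤ η / 2) (k3 : κ ≤ τ) (hκ : 0 < κ)
    (hd : 0 ≤ d) (hPQ : 3 * d ≤ Q - P) (hv : d ≤ v) (hv' : d ≤ v')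
    (hQ : 3 * v + 2 * ε ≤ Q + 2 + 2 * τ + R) (hP : 3 * v' + 2 * ε ≤ R - (P - 2 - 2 * τ)) :
    ∃ l' u', -R ≤ l' ∧ l' ≤ u' ∧ u' ≤ R ∧ (d + κ ≤ u' - l' ∨ (l' = -R ∧ u' = R)) ∧
      ∀ z, l' ≤ z → z ≤ u' → (P - τ < z ∧ z < Q + τ) ∨ (P + 2 < z ∧ z < Q + 2 + 2 * τ) ∨
        (P - 2 - 2 * τ < z ∧ z < Q - 2) := by
  rcases le_or_gt (Q + 2 + 2 * τ) R with hB | hB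
  · rcases le_or_gt (-R) (P + 2) with h | h
    · refine ⟨P + 2 + κ/2, Q + 2 + 2 * τ - κ/2, by linarith, by linarith, by linarith,
        Or.inl (by linarith), fun z h1 h2 => Or.inr (Or.inl ⟨by linarith, by linarith⟩)⟩
    · refine ⟨-R, Q + 2 + 2 * τ - κ/2, by linarith, by linarith, by linarith,
        Or.inl (by linarith), fun z h1 h2 => Or.inr (Or.inl ⟨by linarith, by linarith⟩)⟩
  rcases le_or_gt (-R) (P - 2 - 2 * τ) with hB' | hB'
  · rcases le_or_gt (Q - 2) R with h | h
    · refine ⟨P - 2 - 2 * τ + κ/2, Q - 2 - κ/2, by linarith, by linarith, by linarith,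
        Or.inl (by linarith), fun z h1 h2 => Or.inr (Or.inr ⟨by linarith, by linarith⟩)⟩
    · refine ⟨P - 2 - 2 * τ + κ/2, R, by linarith, by linarith, by linarith,
        Or.inl (by linarith), fun z h1 h2 => Or.inr (Or.inr ⟨by linarith, by linarith⟩)⟩
  rcases lt_or_ge (P + 2) (-R) with g1 | g1
  · exact ⟨-R, R, by linarith, by linarith, by linarith, Or.inr ⟨rfl, rfl⟩,
      fun z h4 h5 => Or.inr (Or.inl ⟨by linarith, by linarith⟩)⟩
  rcases lt_or_ge R (Q - 2) with g2 | g2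
  · exact ⟨-R, R, by linarith, by linarith, by linarith, Or.inr ⟨rfl, rfl⟩,
      fun z h4 h5 => Or.inr (Or.inr ⟨by linarith, by linarith⟩)⟩
  rcases le_or_gt (Q + τ) R with h1 | h1
  · rcases le_or_gt (-R) (P - τ) with h2 | h2
    · refine ⟨P - τ + κ/2, Q + τ - κ/2, by linarith, by linarith, by linarith,
        Or.inl (by linarith), fun z h1 h2 => Or.inl ⟨by linarith, by linarith⟩⟩
    · rcases lt_or_ge (P + 2) (Q + τ) with h3 | h3
      · refine ⟨-R, R, by linarith, by linarith, by linarith, Or.inr ⟨rfl, rfl⟩, fun z h4 h5 => ?_⟩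
        rcases lt_or_ge z (Q + τ) with h6 | h6
        · exact Or.inl ⟨by linarith, h6⟩
        · exact Or.inr (Or.inl ⟨by linarith, by linarith⟩)
      · rcases le_total (R - (P + 2)) (Q + τ + R) with h4 | h4
        · exact ⟨-R, Q + τ - κ/2, by linarith, by linarith, by linarith,
            Or.inl (by linarith), fun z h1 h2 => Or.inl ⟨by linarith, by linarith⟩⟩
        · exact ⟨P + 2 + κ/2, R, by linarith, by linarith, by linarith,
            Or.inl (by linarith), fun z h1 h2 => Or.inr (Or.inl ⟨by linarith, by linarith⟩)⟩
  · rcases lt_or_ge (P - τ) (-R) with h2 | h2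
    · exact ⟨-R, R, by linarith, by linarith, by linarith, Or.inr ⟨rfl, rfl⟩,
        fun z h4 h5 => Or.inl ⟨by linarith, by linarith⟩⟩
    · rcases lt_or_ge (P - τ) (Q - 2) with h3 | h3
      · refine ⟨-R, R, by linarith, by linarith, by linarith, Or.inr ⟨rfl, rfl⟩, fun z h4 h5 => ?_⟩
        rcases lt_or_ge (P - τ) z with h6 | h6
        · exact Or.inl ⟨h6, by linarith⟩
        · exact Or.inr (Or.inr ⟨by linarith, by linarith⟩)
      · rcases le_total (R - (P - τ)) (Q - 2 + R) with h4 | h4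
        · exact ⟨-R, Q - 2 - κ/2, by linarith, by linarith, by linarith,
            Or.inl (by linarith), fun z h1 h2 => Or.inr (Or.inr ⟨by linarith, by linarith⟩)⟩
        · exact ⟨P - τ + κ/2, R, by linarith, by linarith, by linarith,
            Or.inl (by linarith), fun z h1 h2 => Or.inl ⟨by linarith, by linarith⟩⟩

lemma clampw {l u t q : ℝ} (h : l ≤ u) (ht : 0 < t) (h1 : l - t < q) (h2 : q < u + t) :
    ∃ w, l ≤ w ∧ w ≤ u ∧ |q - w| < t := by
  rcases le_total q l with h3 | h3
  · exact ⟨l, le_rfl, h, abs_lt.2 ⟨by linarith, by linarith⟩⟩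
  rcases le_total q u with h4 | h4
  · exact ⟨q, h3, h4, by simpa using ht⟩
  · exact ⟨u, h, le_rfl, abs_lt.2 ⟨by linarith, by linarith⟩⟩

lemma step {a b c ε R : ℝ} (ha : 1 / 4 < a) (hb : 0 < b) (hab : 3 * a + 2 * b < 1)
    (hc : c = 2 * b / (1 - a)) (hε : 0 < ε) (hε' : ε < (1 - 3 * a - 2 * b) / (4 * a) - c)
    (hR : R = 1 - c - ε) : 0 < R ∧ ∃ κ, 0 < κ ∧ ∀ l u, -R ≤ l → l ≤ u → u ≤ R →
      ∃ l' u', -R ≤ l' ∧ l' ≤ u' ∧ u' ≤ R ∧ (u - l + κ ≤ u' - l' ∨ (l' = -R ∧ u' = R)) ∧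
      ∀ z, l' ≤ z → z ≤ u' → ∃ w, l ≤ w ∧ w ≤ u ∧ 0 < kk a b w z := by
  have ha0 : 0 < a := by linarith
  obtain ⟨t, ht⟩ : ∃ t, t = (1 - 3 * a - 2 * b) / 2 := ⟨_, rfl⟩
  obtain ⟨τ, hτ⟩ : ∃ τ, τ = t / a := ⟨_, rfl⟩
  have ht0 : 0 < t := by linarith
  have hτ0 : 0 < τ := by rw [hτ]; positivity
  have haτ : a * τ = t := by rw [hτ]; field_simp
  have hca : c * (1 - a) = 2 * b := by
    rw [hc]; have : (1 - a) ≠ 0 := by linarith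
    field_simp
  have e1 : (1 - 3 * a - 2 * b) / (4 * a) = τ / 2 := by
    rw [hτ, ht]; field_simp; ring
  rw [e1] at hε'
  have hτ1 : τ < 1 := by nlinarith
  have hc0 : 0 < c := by rw [hc]; apply div_pos <;> linarith
  have hR0 : 0 < R := by linarith
  obtain ⟨η, hη⟩ : ∃ η, η = τ / 2 - c - ε := ⟨_, rfl⟩
  have hη0 : 0 < η := by linarith
  refine ⟨hR0, min ε (min (η / 2) τ), by positivity, fun l u hl hlu hu => ?_⟩
  have key : ∀ v, 0 ≤ v → 3 * v ≤ v / a := by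
    intro v hv
    rw [le_div_iff₀ ha0]; nlinarith
  have hid : (1 - c) / a = 2 + 2 * τ + (1 - c) := by
    rw [div_eq_iff ha0.ne']
    have : a * τ = (1 - 3 * a - 2 * b) / 2 := by rw [haτ, ht]
    linear_combination (-2) * this - hca
  have hQ : 3 * (u + R) + 2 * ε ≤ u / a + 2 + 2 * τ + R := by
    have := key (u + (1 - c)) (by linarith)
    rw [add_div, hid] at this; linarith
  have hP : 3 * (R - l) + 2 * ε ≤ R - (l / a - 2 - 2 * τ) := by
    have := key (1 - c - l) (by linarith)
    rw [sub_div, hid] at this; linarith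
  have hPQ : 3 * (u - l) ≤ u / a - l / a := by
    rw [← sub_div]; exact key _ (by linarith)
  obtain ⟨l', u', h1, h2, h3, h4, h5⟩ := comb (κ := min ε (min (η / 2) τ)) hR0 hτ0 hη0 hε
    (by linarith) (min_le_left _ _) ((min_le_right _ _).trans (min_le_left _ _))
    ((min_le_right _ _).trans (min_le_right _ _)) (by positivity) (sub_nonneg.2 hlu) hPQ
    (by linarith) (by linarith) hQ hP
  refine ⟨l', u', h1, h2, h3, h4, fun z hz1 hz2 => ?_⟩
  have hla : a * (l / a) = l := by field_simp
  have hua : a * (u / a) = u := by field_simp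
  rcases h5 z hz1 hz2 with ⟨p, q⟩ | ⟨p, q⟩ | ⟨p, q⟩
  · have p' := mul_lt_mul_of_pos_left p ha0
    have q' := mul_lt_mul_of_pos_left q ha0
    ring_nf at p' q' hla hua
    obtain ⟨w, w1, w2, w3⟩ := clampw (q := a * z) hlu ht0 (by linarith) (by linarith)
    exact ⟨w, w1, w2, kk_pos ha0 _ _ (Or.inr (Or.inl (by rw [← ht]; exact w3)))⟩
  · have p' := mul_lt_mul_of_pos_left p ha0
    have q' := mul_lt_mul_of_pos_left q ha0
    ring_nf at p' q' hla hua
    obtain ⟨w, w1, w2, w3⟩ := clampw (q := a * z - 1 / 2 - a / 2 + b) hlu ht0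
      (by linarith) (by linarith)
    exact ⟨w, w1, w2, kk_pos ha0 _ _ (Or.inr (Or.inr (by rw [← ht]; exact w3)))⟩
  · have p' := mul_lt_mul_of_pos_left p ha0
    have q' := mul_lt_mul_of_pos_left q ha0
    ring_nf at p' q' hla hua
    obtain ⟨w, w1, w2, w3⟩ := clampw (q := a * z + 1 / 2 + a / 2 - b) hlu ht0
      (by linarith) (by linarith)
    exact ⟨w, w1, w2, kk_pos ha0 _ _ (Or.inl (by rw [← ht]; exact w3))⟩

/-- In the simple case `1 − 4a − 2b + 3a² − 6ab > 0`, with `T = [−1 + c + ε, 1 − c − ε]`,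
some iterate of the kernel is (strictly) positive everywhere on `T × T`.
(Recall `larssonKernelIter a b T n = m_T^{(n+1)}`.) -/
theorem kernel_iterate_positive_simple_case
    (a b : ℝ) (ha : 1 / 4 < a) (hb : 0 < b) (hab : 3 * a + 2 * b < 1)
    (c : ℝ) (hc : c = 2 * b / (1 - a))
    (hsimple : 0 < 1 - 4 * a - 2 * b + 3 * a ^ 2 - 6 * a * b)
    (ε : ℝ) (hε : 0 < ε) (hε' : ε < (1 - 3 * a - 2 * b) / (4 * a) - c)
    (T : Set ℝ) (hT : T = Set.Icc (-1 + c + ε) (1 - c - ε)) :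
    ∃ n : ℕ, ∀ x ∈ T, ∀ y ∈ T, 0 < larssonKernelIter a b T n x y := by
  have ha0 : 0 < a := by linarith
  obtain ⟨R, hR⟩ : ∃ R, R = 1 - c - ε := ⟨_, rfl⟩
  have hT' : T = Set.Icc (-R) R := by rw [hT, hR]; congr 1; ring
  obtain ⟨hR0, κ, hκ, H⟩ := step ha hb hab hc hε hε' hR
  have main : ∀ n : ℕ, ∀ x ∈ Set.Icc (-R) R, ∃ l u, -R ≤ l ∧ l ≤ u ∧ u ≤ R ∧
      ((n : ℝ) * κ ≤ u - l ∨ (l = -R ∧ u = R)) ∧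
      ∀ z, l ≤ z → z ≤ u → 0 < kkI a b R n x z := by
    intro n x hx
    induction n with
    | zero =>
      obtain ⟨l, u, h1, h2, h3, h4, h5⟩ := H x x hx.1 le_rfl hx.2
      refine ⟨l, u, h1, h2, h3, Or.inl (by simpa using h2), fun z hz1 hz2 => ?_⟩
      obtain ⟨w, w1, w2, w3⟩ := h5 z hz1 hz2
      rw [le_antisymm w2 w1] at w3
      exact w3
    | succ n ih =>
      obtain ⟨l, u, h1, h2, h3, h4, h5⟩ := ih
      obtain ⟨l', u', g1, g2, g3, g4, g5⟩ := H l u h1 h2 h3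
      refine ⟨l', u', g1, g2, g3, ?_, fun z hz1 hz2 => ?_⟩
      · rcases g4 with g4 | g4
        · rcases h4 with h4 | ⟨h4, h6⟩
          · left; push_cast; linarith
          · exfalso; linarith
        · exact Or.inr g4
      · obtain ⟨w, w1, w2, w3⟩ := g5 z hz1 hz2
        exact kkI_pos ha0 b hR0 n x z w ⟨by linarith, by linarith⟩ (h5 w w1 w2) w3
  obtain ⟨n, hn⟩ := exists_nat_gt (2 * R / κ)
  rw [div_lt_iff₀ hκ] at hn
  refine ⟨n, fun x hx y hy => ?_⟩
  rw [hT'] at hx hy ⊢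
  rw [iter_eq a b R n x y hy]
  obtain ⟨l, u, h1, h2, h3, h4, h5⟩ := main n x hx
  rcases h4 with h4 | ⟨h4, h6⟩
  · exfalso; linarith
  · exact h5 y (by linarith [hy.1]) (by linarith [hy.2])
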